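/- Let X, Y, Z be locally finite topological spaces, f : X → Y and g : Y → Z continuous maps, and α : π₀(X) → ℚ a function with finite support. Then f_!(α) : π₀(Y) → ℚ has finite support, and (g∘f)_!(α) = g_!(f_!(α)) as functions on π₀(Z). -/

import Mathlib

/-!
Multiplication by the weight `μ` turns pushforward into summation over the fibers of `π₀(f)`, and
the latter is functorial. What has to be shown is that, for the homotopy fiber `F` of `f` over `y`
and a component of `X` containing `x` and mapping to the component of `y`, the total weight of the
components `z` of `F` lying over `[x]` satisfies `μ(Y, y) · ∑ μ(F, z) = μ(X, x)`.

The components of `F` over `[x]` form one orbit of the monodromy action of `π₁(Y, f x)`, with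
stabilizer the image of `π₁(X, x)`, so their number is the index of this image. Applied to the
loop spaces `Ωⁿ X → Ωⁿ Y`, whose homotopy fibers are the loop spaces of `F`, the same count computes
the orders of the kernels of `πₙ(F) → πₙ(X)`, hence all orders in the long exact sequence of
homotopy groups, and the alternating product of these orders telescopes. That all `z` over `[x]`
have the same weight follows from transport: a path in the base of a fibration induces a homotopy
equivalence of fibers.
-/

open scoped unitInterval

/-- The homotopy fiber of `f : X → Y` at `y : Y`: pairs `(x, p)` with `p` a path
from `f x` to `y`, topologized as a subspace of `X × C(I, Y)`. -/
abbrev HomotopyFiber {X Y : Type*} [TopologicalSpace X] [TopologicalSpace Y]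
    (f : X → Y) (y : Y) : Type _ :=
  {p : X × C(I, Y) // p.2 0 = f p.1 ∧ p.2 1 = y}

/-- The projection `i : F_y(f) → X`, `(x, p) ↦ x`. -/
def fiberIncl {X Y : Type*} [TopologicalSpace X] [TopologicalSpace Y]
    (f : X → Y) (y : Y) : HomotopyFiber f y → X :=
  fun p => p.1.1

/-- A space is locally finite if all its homotopy groups `π_n`, `n ≥ 1`, at all base
points are finite, and at each base point all but finitely many of them are trivial. -/
def IsLocallyFinite (X : Type*) [TopologicalSpace X] : Prop :=
  ∀ x : X, (∀ n : ℕ, 1 ≤ n → Finite (HomotopyGroup (Fin n) X x)) ∧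
    ∃ N : ℕ, ∀ n : ℕ, N < n → Subsingleton (HomotopyGroup (Fin n) X x)

/-- `μ(X, x) = ∏_{n ≥ 1} |π_n(X, x)|^{(-1)^n}`. -/
noncomputable def mu (X : Type*) [TopologicalSpace X] (x : X) : ℚ :=
  ∏ᶠ n : ℕ, (Nat.card (HomotopyGroup (Fin (n + 1)) X x) : ℚ) ^ ((-1 : ℤ) ^ (n + 1))

/-- The path component of a point, as an element of `π₀(X)`. -/
def toPi0 {X : Type*} [TopologicalSpace X] (x : X) : ZerothHomotopy X :=
  Quotient.mk (pathSetoid X) x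

/-- The map `π₀(f) : π₀(X) → π₀(Y)` induced by a continuous map. -/
def pi0Map {X Y : Type*} [TopologicalSpace X] [TopologicalSpace Y] {f : X → Y}
    (hf : Continuous f) : ZerothHomotopy X → ZerothHomotopy Y :=
  Quot.map f (fun _ _ h => ⟨h.somePath.map hf⟩)


/-- The pushforward `f_!(α)` of a finitely supported function `α : π₀(X) → ℚ` along a
map `f : X → Y`: its value on a component `c` of `Y` is the sum, over the path components
`z` of the homotopy fiber of `f` at (a representative of) `c`, of
`α([i(z̃)]) · μ(F, z̃)` for a representative `z̃` of `z`. -/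
noncomputable def pushforward {X Y : Type*} [TopologicalSpace X] [TopologicalSpace Y]
    (f : X → Y) (α : ZerothHomotopy X → ℚ) : ZerothHomotopy Y → ℚ :=
  fun c => ∑ᶠ z : ZerothHomotopy (HomotopyFiber f c.out),
    α (toPi0 (fiberIncl f c.out z.out)) * mu (HomotopyFiber f c.out) z.out

open scoped Topology Topology.Homotopy ContinuousMap

section PathComponents

variable {A A' A'' : Type*} [TopologicalSpace A] [TopologicalSpace A'] [TopologicalSpace A'']

lemma toPi0_eq_toPi0_iff {a b : A} : toPi0 a = toPi0 b ↔ Joined a b :=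
  Quotient.eq (r := pathSetoid A)

lemma toPi0_out (z : ZerothHomotopy A) : toPi0 z.out = z :=
  Quotient.out_eq z

lemma toPi0_surjective : Function.Surjective (toPi0 : A → ZerothHomotopy A) :=
  fun z ↦ ⟨z.out, toPi0_out z⟩

@[simp]
lemma pi0Map_toPi0 {f : A → A'} (hf : Continuous f) (a : A) : pi0Map hf (toPi0 a) = toPi0 (f a) :=
  rfl

lemma pi0Map_id : pi0Map (continuous_id : Continuous (id : A → A)) = id :=
  toPi0_surjective.injective_comp_right rfl

lemma pi0Map_comp {f : A → A'} {g : A' → A''} (hg : Continuous g) (hf : Continuous f) :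
    pi0Map (hg.comp hf) = pi0Map hg ∘ pi0Map hf :=
  toPi0_surjective.injective_comp_right rfl

lemma pi0Map_eq_of_homotopic {f g : C(A, A')} (h : f.Homotopic g) :
    pi0Map f.continuous = pi0Map g.continuous :=
  toPi0_surjective.injective_comp_right <| funext fun a ↦
    toPi0_eq_toPi0_iff.2 ⟨h.some.evalAt a⟩

/-- The bijection on path components induced by a homotopy equivalence. -/
def pi0Equiv (e : A ≃ₕ A') : ZerothHomotopy A ≃ ZerothHomotopy A' where
  toFun := pi0Map e.toFun.continuous
  invFun := pi0Map e.invFun.continuous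
  left_inv := congr_fun <|
    (pi0Map_comp _ _).symm.trans ((pi0Map_eq_of_homotopic e.left_inv).trans pi0Map_id)
  right_inv := congr_fun <|
    (pi0Map_comp _ _).symm.trans ((pi0Map_eq_of_homotopic e.right_inv).trans pi0Map_id)

end PathComponents

/-- A path lifting function for `π : E → B`, which exists exactly when `π` is a Hurewicz fibration:
`lift` turns a point `e` and a path in `B` starting at `π e` into a path in `E` starting at `e`,
continuously in all the data. -/
structure PathLifting {E B : Type*} [TopologicalSpace E] [TopologicalSpace B] (π : E → B) where
  lift : {z : E × C(I, B) // z.2 0 = π z.1} × I → E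
  continuous_lift : Continuous lift
  lift_zero : ∀ z, lift (z, 0) = z.1.1
  proj_lift : ∀ z s, π (lift (z, s)) = z.1.2 s

namespace PathLifting

variable {E B : Type*} [TopologicalSpace E] [TopologicalSpace B] {π : E → B} (L : PathLifting π)
  {b b' : B}

/-- The path in `E` over `p` starting at the point `e` of the fiber, followed up to time `s`. -/
def along (p : Path b b') (e : π ⁻¹' {b}) (s : I) : E :=
  L.lift (⟨(e, p), p.source.trans e.2.symm⟩, s)

@[fun_prop]
lemma continuous_along {A : Type*} [TopologicalSpace A] (p : Path b b') {e : A → π ⁻¹' {b}}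
    {s : A → I} (he : Continuous e) (hs : Continuous s) :
    Continuous fun a ↦ L.along p (e a) (s a) :=
  L.continuous_lift.comp (by fun_prop)

lemma along_zero (p : Path b b') (e : π ⁻¹' {b}) : L.along p e 0 = e :=
  L.lift_zero _

lemma proj_along (p : Path b b') (e : π ⁻¹' {b}) (s : I) : π (L.along p e s) = p s :=
  L.proj_lift _ s

/-- The map of fibers induced by a path in the base. -/
def transport (p : Path b b') : C(π ⁻¹' {b}, π ⁻¹' {b'}) where
  toFun e := ⟨L.along p e 1, (L.proj_along p e 1).trans p.target⟩
  continuous_toFun := Continuous.subtype_mk (by fun_prop) _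

/-- The homotopy lifts at time `u` the remaining part of `p`, starting from `H (u, ·)`. -/
lemma transport_comp_homotopic {A : Type*} [TopologicalSpace A] (p : Path b b')
    {e₀ : C(A, π ⁻¹' {b})} {e₁ : C(A, π ⁻¹' {b'})} (H : C(I × A, E))
    (hH : ∀ s a, π (H (s, a)) = p s) (h₀ : ∀ a, H (0, a) = e₀ a) (h₁ : ∀ a, H (1, a) = e₁ a) :
    ((L.transport p).comp e₀).Homotopic e₁ := by
  let tail : C(I, C(I, B)) := ContinuousMap.curry ⟨fun z ↦ p.extend (z.1 + z.2 : ℝ), by fun_prop⟩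
  have tail_zero (u : I) : tail u 0 = p u := by simp [tail]
  have tail_symm (u : I) : tail u (σ u) = b' := by simp [tail]
  have tail_start : tail 0 = p := by ext r; simp [tail]
  refine ⟨⟨⟨fun z ↦ ⟨L.lift (⟨(H z, tail z.1), by rw [tail_zero, hH]⟩, σ z.1), ?_⟩, ?_⟩, ?_, ?_⟩⟩
  · exact (L.proj_lift _ _).trans (tail_symm _)
  · exact (L.continuous_lift.comp (by fun_prop)).subtype_mk _
  · intro a
    simp only [tail_start, h₀, unitInterval.symm_zero]
    rfl
  · intro a
    simp only [unitInterval.symm_one, L.lift_zero, h₁]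

lemma transport_symm_comp_transport_homotopic (p : Path b b') :
    ((L.transport p.symm).comp (L.transport p)).Homotopic (ContinuousMap.id _) := by
  refine L.transport_comp_homotopic p.symm
    ⟨fun z ↦ L.along p z.2 (σ z.1), by fun_prop⟩ ?_ ?_ ?_
  · exact fun s e ↦ L.proj_along p e (σ s)
  · intro e
    simp only [ContinuousMap.coe_mk, unitInterval.symm_zero]
    rfl
  · intro e
    simp only [ContinuousMap.coe_mk, unitInterval.symm_one, L.along_zero, ContinuousMap.id_apply]

/-- Transport along a path as a homotopy equivalence of fibers. -/
def transportEquiv (p : Path b b') : (π ⁻¹' {b}) ≃ₕ (π ⁻¹' {b'}) where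
  toFun := L.transport p
  invFun := L.transport p.symm
  left_inv := L.transport_symm_comp_transport_homotopic p
  right_inv := by simpa using L.transport_symm_comp_transport_homotopic p.symm

lemma joined_transport (p : Path b b') {e : π ⁻¹' {b}} {e' : π ⁻¹' {b'}} (δ : Path (e : E) e')
    (hδ : ∀ s, π (δ s) = p s) : Joined (L.transport p e) e' := by
  have h : ((L.transport p).comp (.const Unit e)).Homotopic (.const Unit e') :=
    L.transport_comp_homotopic p ⟨fun z ↦ δ z.1, by fun_prop⟩ (fun s _ ↦ hδ s)
      (fun _ ↦ δ.source) (fun _ ↦ δ.target)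
  exact ⟨h.some.evalAt ()⟩

/-- A path lifting function for a map to a product yields one for its second component, by lifting
paths whose first component is constant. -/
def sndComp {C : Type*} [TopologicalSpace C] {π : E → B × C} (L : PathLifting π)
    (hπ : Continuous π) : PathLifting fun e ↦ (π e).2 where
  lift z := L.lift
    (⟨(z.1.1.1, (ContinuousMap.const I (π z.1.1.1).1).prodMk z.1.1.2), Prod.ext rfl z.1.2⟩, z.2)
  continuous_lift := L.continuous_lift.comp (by
    have : Continuous fun z : {z : E × C(I, C) // z.2 0 = (π z.1).2} × I ↦
        (ContinuousMap.const I (π z.1.1.1).1).prodMk z.1.1.2 :=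
      ContinuousMap.continuous_of_continuous_uncurry _ (by
        simp only [Function.uncurry_def, ContinuousMap.prod_eval, ContinuousMap.const_apply]
        fun_prop)
    fun_prop)
  lift_zero _ := L.lift_zero _
  proj_lift _ s := congr_arg Prod.snd (L.proj_lift _ s)

end PathLifting

/-- A retraction of `K × I` onto `K × {0} ∪ A × I`, which exists exactly when `A ⊆ K` is a closed
cofibration. The retraction takes `z` to `(point z, max 0 (time z))`; letting `time` be negative
where the retraction hits the bottom `K × {0}` saves truncating it. -/
structure CofibrationRetraction (K : Type*) [TopologicalSpace K] (A : Set K) where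
  point : C(I × K, K)
  time : C(I × K, ℝ)
  point_mem : ∀ z, 0 ≤ time z → point z ∈ A
  point_zero : ∀ k, point (0, k) = k
  time_zero : ∀ k, time (0, k) ≤ 0
  point_of_mem : ∀ s, ∀ k ∈ A, point (s, k) = k
  time_of_mem : ∀ (s : I), ∀ k ∈ A, time (s, k) = s

/-- The space of pairs of a point `b` of `B` and an extension to `K` of the map `φ b : A → Y`. -/
abbrev ExtensionSpace {B K Y : Type*} [TopologicalSpace B] [TopologicalSpace K]
    [TopologicalSpace Y] (A : Set K) (φ : B → K → Y) : Type _ :=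
  {e : B × C(K, Y) // ∀ k ∈ A, e.2 k = φ e.1 k}

namespace CofibrationRetraction

variable {K : Type*} [TopologicalSpace K] {A : Set K}

section PathLifting

variable {B Y : Type*} [TopologicalSpace B] [TopologicalSpace Y] {φ : B → K → Y}
  (R : CofibrationRetraction K A)

open Classical in
/-- Given a partial extension `e` over the start of a path `w` in the base, the resulting map on
`K × {0} ∪ A × I` composed with the retraction. -/
noncomputable def liftValue (e : ExtensionSpace A φ) (w : C(I, B)) (z : I × K) : Y :=
  if R.time z ≤ 0 then e.1.2 (R.point z)
  else φ (w (Set.projIcc 0 1 zero_le_one (R.time z))) (R.point z)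

lemma liftValue_zero (e : ExtensionSpace A φ) (w : C(I, B)) (k : K) :
    R.liftValue e w (0, k) = e.1.2 k := by
  rw [liftValue, if_pos (R.time_zero k), R.point_zero]

lemma liftValue_of_mem {e : ExtensionSpace A φ} {w : C(I, B)} (hw : w 0 = e.1.1) (s : I) {k : K}
    (hk : k ∈ A) : R.liftValue e w (s, k) = φ (w s) k := by
  rw [liftValue, R.time_of_mem s k hk, R.point_of_mem s k hk, Set.projIcc_val]
  split_ifs with hs
  · rw [e.2 k hk, ← hw, show s = 0 from Subtype.ext (le_antisymm hs s.2.1)]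
  · rfl

lemma continuous_liftValue [LocallyCompactSpace K]
    (hφ : ContinuousOn (Function.uncurry φ) (Set.univ ×ˢ A)) :
    Continuous fun z : {z : ExtensionSpace A φ × C(I, B) // z.2 0 = z.1.1.1} × I × K ↦
      R.liftValue z.1.1.1 z.1.1.2 z.2 := by
  refine continuous_if_le (by fun_prop) continuous_const ?_ ?_ fun z hz ↦ ?_
  · exact Continuous.continuousOn (by fun_prop)
  · exact hφ.comp (f := fun z : {z : ExtensionSpace A φ × C(I, B) // z.2 0 = z.1.1.1} × I × K ↦
      (z.1.1.2 (Set.projIcc 0 1 zero_le_one (R.time z.2)), R.point z.2))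
      (by fun_prop) fun z hz ↦ ⟨Set.mem_univ _, R.point_mem _ hz⟩
  · rw [hz, Set.projIcc_left, z.1.1.1.2 _ (R.point_mem _ hz.ge), ← z.1.2]
    rfl

/-- Extensions along a cofibration form a fibration. -/
noncomputable def pathLifting [LocallyCompactSpace K]
    (hφ : ContinuousOn (Function.uncurry φ) (Set.univ ×ˢ A)) :
    PathLifting fun e : ExtensionSpace A φ ↦ e.1.1 where
  lift z := ⟨(z.1.1.2 z.2, ⟨fun k ↦ R.liftValue z.1.1.1 z.1.1.2 (z.2, k),
    (R.continuous_liftValue hφ).comp (by fun_prop : Continuous fun k ↦ (z.1, z.2, k))⟩),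
    fun _ hk ↦ R.liftValue_of_mem z.1.2 _ hk⟩
  continuous_lift := by
    refine Continuous.subtype_mk (Continuous.prodMk (by fun_prop) ?_) _
    exact ContinuousMap.continuous_of_continuous_uncurry _ <|
      (R.continuous_liftValue hφ).comp (by fun_prop :
        Continuous fun z : ({z : ExtensionSpace A φ × C(I, B) // z.2 0 = z.1.1.1} × I) × K ↦
          (z.1.1, z.1.2, z.2))
  lift_zero z := Subtype.ext (Prod.ext z.2 (ContinuousMap.ext (R.liftValue_zero _ _)))
  proj_lift _ _ := rfl

end PathLifting

section Cube

/-- The position of a point of the cube relative to the center of the cube. -/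
noncomputable def cubeOffset {N : Type*} (t : I^N) : N → ℝ := fun i ↦ t i - 1 / 2

@[fun_prop]
lemma continuous_cubeOffset {N : Type*} : Continuous (cubeOffset (N := N)) := by
  unfold cubeOffset
  fun_prop

variable {N : Type*} [Fintype N]

lemma norm_cubeOffset_le (t : I^N) : ‖cubeOffset t‖ ≤ 1 / 2 := by
  refine (pi_norm_le_iff_of_nonneg (by norm_num)).2 fun i ↦ abs_le.2 ?_
  simp only [cubeOffset]
  constructor <;> linarith [(t i).2.1, (t i).2.2]

lemma mem_cubeBoundary_iff {t : I^N} : t ∈ Cube.boundary N ↔ ‖cubeOffset t‖ = 1 / 2 := by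
  have abs_eq_iff (i : N) : |cubeOffset t i| = 1 / 2 ↔ t i = 0 ∨ t i = 1 := by
    rw [abs_eq (by norm_num), or_comm, Subtype.ext_iff, Subtype.ext_iff]
    simp only [cubeOffset, Set.Icc.coe_zero, Set.Icc.coe_one]
    constructor <;> rintro (h | h) <;> first | (left; linarith) | (right; linarith)
  refine Iff.trans (exists_congr fun i ↦ (abs_eq_iff i).symm) ⟨fun ⟨i, hi⟩ ↦ ?_, fun h ↦ ?_⟩
  · exact le_antisymm (norm_cubeOffset_le t) (hi.symm.le.trans (norm_le_pi_norm (cubeOffset t) i))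
  · contrapose! h
    have abs_lt (i : N) : |cubeOffset t i| < 1 / 2 :=
      ((norm_le_pi_norm (cubeOffset t) i).trans (norm_cubeOffset_le t)).lt_of_ne (h i)
    exact ((pi_norm_lt_iff (by norm_num)).2 abs_lt).ne

/-- The point of the cube with the same direction from the center as the offset `v`, at distance
`‖v‖`, or on the boundary if `v` points outside the cube. -/
noncomputable def cubeRadial (v : N → ℝ) : I^N :=
  fun i ↦ Set.projIcc 0 1 zero_le_one (((max 1 (2 * ‖v‖))⁻¹ • v) i + 1 / 2)

@[fun_prop]
lemma continuous_cubeRadial : Continuous (cubeRadial (N := N)) := by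
  have (v : N → ℝ) : max 1 (2 * ‖v‖) ≠ 0 := (zero_lt_one.trans_le (le_max_left _ _)).ne'
  unfold cubeRadial
  fun_prop (disch := assumption)

lemma cubeOffset_cubeRadial (v : N → ℝ) :
    cubeOffset (cubeRadial v) = (max 1 (2 * ‖v‖))⁻¹ • v := by
  funext i
  have one_le : 1 ≤ max 1 (2 * ‖v‖) := le_max_left _ _
  have abs_le_half : |((max 1 (2 * ‖v‖))⁻¹ • v) i| ≤ 1 / 2 := by
    rw [Pi.smul_apply, smul_eq_mul, abs_mul, abs_inv, abs_of_pos (by linarith),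
      inv_mul_le_iff₀ (by linarith)]
    linarith [norm_le_pi_norm v i, Real.norm_eq_abs (v i), le_max_right 1 (2 * ‖v‖)]
  obtain ⟨lower, upper⟩ := abs_le.1 abs_le_half
  rw [cubeOffset, cubeRadial, Set.projIcc_of_mem _ ⟨by linarith, by linarith⟩]
  exact add_sub_cancel_right _ _

lemma cubeRadial_mem_boundary {v : N → ℝ} (hv : 1 / 2 ≤ ‖v‖) :
    cubeRadial v ∈ Cube.boundary N := by
  rw [mem_cubeBoundary_iff, cubeOffset_cubeRadial, norm_smul, max_eq_right (by linarith), norm_inv,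
    norm_mul, norm_norm, Real.norm_two]
  field_simp

lemma cubeRadial_smul_cubeOffset {c : ℝ} {t : I^N} (hc : max 1 (2 * ‖c • cubeOffset t‖) = c) :
    cubeRadial (c • cubeOffset t) = t := by
  have offset_injective : Function.Injective (cubeOffset (N := N)) := fun _ _ h ↦
    funext fun i ↦ Subtype.ext (sub_left_injective (congr_fun h i))
  have c_ne_zero : c ≠ 0 := (zero_lt_one.trans_le ((le_max_left _ _).trans hc.le)).ne'
  apply offset_injective
  rw [cubeOffset_cubeRadial, hc, inv_smul_smul₀ c_ne_zero]

lemma norm_smul_cubeOffset (s : I) {t : I^N} (ht : t ∈ Cube.boundary N) :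
    ‖(1 + 2 * (s : ℝ)) • cubeOffset t‖ = s + 1 / 2 := by
  have := s.2.1
  rw [norm_smul, mem_cubeBoundary_iff.1 ht, Real.norm_of_nonneg (by linarith)]
  ring

/-- The radial retraction of `I^N × I` from a point above the center of the cube. -/
noncomputable def cube : CofibrationRetraction (I^N) (Cube.boundary N) where
  point := ⟨fun z ↦ cubeRadial ((1 + 2 * (z.1 : ℝ)) • cubeOffset z.2), by fun_prop⟩
  time := ⟨fun z ↦ ‖(1 + 2 * (z.1 : ℝ)) • cubeOffset z.2‖ - 1 / 2, by fun_prop⟩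
  point_mem z hz := cubeRadial_mem_boundary (by simpa using hz)
  point_zero t := by
    refine cubeRadial_smul_cubeOffset ?_
    have := norm_cubeOffset_le t
    simp only [Set.Icc.coe_zero, mul_zero, add_zero, one_smul]
    exact max_eq_left (by linarith)
  time_zero t := by simpa using norm_cubeOffset_le t
  point_of_mem s t ht := by
    refine cubeRadial_smul_cubeOffset ?_
    have := s.2.1
    rw [norm_smul_cubeOffset s ht, max_eq_right (by linarith)]
    ring
  time_of_mem s t ht := by
    rw [ContinuousMap.coe_mk, norm_smul_cubeOffset s ht, add_sub_cancel_right]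

end Cube

/-- The transfer of a retraction along a homeomorphism. -/
def congr {K' : Type*} [TopologicalSpace K'] {A' : Set K'} (R : CofibrationRetraction K A)
    (h : K' ≃ₜ K) (hA : ∀ k, h k ∈ A ↔ k ∈ A') : CofibrationRetraction K' A' where
  point := ⟨fun z ↦ h.symm (R.point (z.1, h z.2)), by fun_prop⟩
  time := ⟨fun z ↦ R.time (z.1, h z.2), by fun_prop⟩
  point_mem z hz := by
    rw [← hA, ContinuousMap.coe_mk, h.apply_symm_apply]
    exact R.point_mem _ hz
  point_zero k := by simp [R.point_zero]
  time_zero k := R.time_zero (h k)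
  point_of_mem s k hk := by simp [R.point_of_mem s (h k) ((hA k).2 hk)]
  time_of_mem s k hk := R.time_of_mem s (h k) ((hA k).2 hk)

/-- The retraction for the end points of the interval, viewed as the one-dimensional cube. -/
noncomputable def interval : CofibrationRetraction I {0, 1} :=
  (cube (N := Unit)).congr (Homeomorph.funUnique Unit I).symm fun _ ↦ by simp [Cube.boundary]

end CofibrationRetraction

section HomotopyGroups

variable {X Y : Type*} [TopologicalSpace X] [TopologicalSpace Y]

lemma genLoopHomotopic_iff_joined {N : Type*} {x : X} {γ γ' : Ω^ N X x} :
    GenLoop.Homotopic γ γ' ↔ Joined γ γ' := by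
  constructor
  · rintro ⟨H⟩
    refine ⟨⟨⟨fun s ↦ ⟨H.toContinuousMap.curry s, fun t ht ↦ ?_⟩, ?_⟩, ?_, ?_⟩⟩
    · exact (H.eq_fst s ht).trans (γ.2 t ht)
    · exact Continuous.subtype_mk (map_continuous _) _
    · exact GenLoop.ext _ _ H.apply_zero
    · exact GenLoop.ext _ _ H.apply_one
  · rintro ⟨p⟩
    refine ⟨⟨⟨⟨fun z ↦ p z.1 z.2, by fun_prop⟩, fun t ↦ ?_, fun t ↦ ?_⟩, fun s t ht ↦ ?_⟩⟩
    · exact congr_arg (· t) p.source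
    · exact congr_arg (· t) p.target
    · exact ((p s).2 t ht).trans (γ.2 t ht).symm

/-- The homotopy group `π_N(X, x)` as the set of components of the loop space `Ω^N X`. -/
def homotopyGroupEquivPi0 (N : Type*) (x : X) : HomotopyGroup N X x ≃ ZerothHomotopy (Ω^ N X x) :=
  Quotient.congr (rb := pathSetoid (Ω^ N X x)) (Equiv.refl _)
    fun _ _ ↦ genLoopHomotopic_iff_joined

/-- The map of loop spaces induced by `f`; on components it is the map `π_N(f)`. -/
def loopMap (N : Type*) (f : C(X, Y)) (x : X) : C(Ω^ N X x, Ω^ N Y (f x)) where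
  toFun γ := ⟨f.comp γ.1, fun t ht ↦ congr_arg f (γ.2 t ht)⟩
  continuous_toFun := Continuous.subtype_mk (by fun_prop) _

/-- The map `π_N(X, x) → π_N(Y, f x)` induced by `f`, in terms of components of loop spaces. -/
abbrev homotopyGroupMap (N : Type*) (f : C(X, Y)) (x : X) :
    ZerothHomotopy (Ω^ N X x) → ZerothHomotopy (Ω^ N Y (f x)) :=
  pi0Map (loopMap N f x).continuous

/-- The fiber over `x` of the space of maps from the cube to `X` that are constant on the boundary
is the loop space at `x`. -/
def fiberHomeoGenLoop (N : Type*) (x : X) :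
    (fun e : ExtensionSpace (Cube.boundary N) (fun (x : X) (_ : I^N) ↦ x) ↦ e.1.1) ⁻¹' {x} ≃ₜ
      Ω^ N X x where
  toFun e := ⟨e.1.1.2, fun t ht ↦ (e.1.2 t ht).trans e.2⟩
  invFun γ := ⟨⟨(x, γ.1), γ.2⟩, rfl⟩
  left_inv e := Subtype.ext (Subtype.ext (Prod.ext e.2.symm rfl))
  right_inv _ := rfl
  continuous_toFun := by fun_prop
  continuous_invFun := by fun_prop

variable {N : Type*}

section BasePoint

variable [Fintype N]

/-- A path lifting function for the space of maps from the cube to `X` that are constant on the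
boundary, fibered over `X` by their boundary value. -/
noncomputable def freeSpherePathLifting (N X : Type*) [Fintype N] [TopologicalSpace X] :
    PathLifting fun e : ExtensionSpace (Cube.boundary N) (fun (x : X) (_ : I^N) ↦ x) ↦ e.1.1 :=
  CofibrationRetraction.cube.pathLifting continuous_fst.continuousOn

/-- The change of base point along a path, on loop spaces. -/
noncomputable def basePointChange (N : Type*) [Fintype N] {x x' : X} (p : Path x x') :
    Ω^ N X x ≃ₕ Ω^ N X x' :=
  ((fiberHomeoGenLoop N x).symm.toHomotopyEquiv.trans
    ((freeSpherePathLifting N X).transportEquiv p)).trans (fiberHomeoGenLoop N x').toHomotopyEquiv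

lemma basePointChange_comp_loopMap_homotopic {f g : C(X, Y)} (H : f.Homotopy g) (x : X) :
    ((basePointChange N (H.evalAt x)).toFun.comp (loopMap N f x)).Homotopic (loopMap N g x) := by
  have h := (freeSpherePathLifting N Y).transport_comp_homotopic (H.evalAt x)
    (e₀ := ((fiberHomeoGenLoop N (f x)).symm : C(_, _)).comp (loopMap N f x))
    (e₁ := ((fiberHomeoGenLoop N (g x)).symm : C(_, _)).comp (loopMap N g x))
    ⟨fun z ↦ ⟨(H (z.1, x), (H.curry z.1).comp z.2.1), fun t ht ↦ by
      simp [z.2.2 t ht]⟩,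
      .subtype_mk (.prodMk (by fun_prop) (ContinuousMap.continuous_of_continuous_uncurry _
        (by fun_prop : Continuous fun z : (I × Ω^ N X x) × I^N ↦ H (z.1.1, z.1.2 z.2)))) _⟩
    (fun _ _ ↦ rfl)
    (fun γ ↦ Subtype.ext (Prod.ext (H.apply_zero x) (by ext; simp [fiberHomeoGenLoop, loopMap])))
    (fun γ ↦ Subtype.ext (Prod.ext (H.apply_one x) (by ext; simp [fiberHomeoGenLoop, loopMap])))
  exact (ContinuousMap.Homotopic.refl (fiberHomeoGenLoop N (g x)).toHomotopyEquiv.toFun).comp h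

end BasePoint

lemma homotopyGroupMap_bijective_of_homotopic_id [Finite N] {f : C(X, X)}
    (h : f.Homotopic (ContinuousMap.id X)) (x : X) : (homotopyGroupMap N f x).Bijective := by
  cases nonempty_fintype N
  let H := h.symm.some
  rw [homotopyGroupMap, ← pi0Map_eq_of_homotopic (basePointChange_comp_loopMap_homotopic H x)]
  exact (pi0Equiv (basePointChange N (H.evalAt x))).bijective

/-- Two-out-of-six for the chain `e`, `e⁻¹`, `e`. -/
lemma homotopyGroupMap_bijective [Finite N] (e : X ≃ₕ Y) (x : X) :
    (homotopyGroupMap N e.toFun x).Bijective := by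
  have left_bijective : (homotopyGroupMap N e.invFun (e.toFun x) ∘
      homotopyGroupMap N e.toFun x).Bijective := by
    rw [← pi0Map_comp]
    exact homotopyGroupMap_bijective_of_homotopic_id e.left_inv x
  have right_bijective : (homotopyGroupMap N e.toFun (e.invFun (e.toFun x)) ∘
      homotopyGroupMap N e.invFun (e.toFun x)).Bijective := by
    rw [← pi0Map_comp]
    exact homotopyGroupMap_bijective_of_homotopic_id e.right_inv (e.toFun x)
  have inv_bijective : (homotopyGroupMap N e.invFun (e.toFun x)).Bijective :=
    ⟨right_bijective.1.of_comp, left_bijective.2.of_comp⟩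
  exact (Function.Bijective.of_comp_iff' inv_bijective _).1 left_bijective

lemma card_homotopyGroup_eq_card_pi0 (x : X) :
    Nat.card (HomotopyGroup N X x) = Nat.card (ZerothHomotopy (Ω^ N X x)) :=
  Nat.card_congr (homotopyGroupEquivPi0 N x)

lemma card_homotopyGroup_homotopyEquiv [Finite N] (e : X ≃ₕ Y) (x : X) :
    Nat.card (HomotopyGroup N Y (e.toFun x)) = Nat.card (HomotopyGroup N X x) := by
  rw [card_homotopyGroup_eq_card_pi0, card_homotopyGroup_eq_card_pi0]
  exact (Nat.card_congr (Equiv.ofBijective _ (homotopyGroupMap_bijective e x))).symm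

lemma card_homotopyGroup_of_joined [Finite N] {x x' : X} (h : Joined x x') :
    Nat.card (HomotopyGroup N X x) = Nat.card (HomotopyGroup N X x') := by
  cases nonempty_fintype N
  rw [card_homotopyGroup_eq_card_pi0, card_homotopyGroup_eq_card_pi0]
  exact Nat.card_congr (pi0Equiv (basePointChange N h.some))

end HomotopyGroups

section HomotopyFibers

variable {X Y : Type*} [TopologicalSpace X] [TopologicalSpace Y]

lemma homotopic_trans_of_square {a b c d : Y} (G : C(I × I, Y)) {left : Path a b}
    {right : Path c d} {bottom : Path a c} {top : Path b d} (hleft : ∀ r, G (0, r) = left r)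
    (hright : ∀ r, G (1, r) = right r) (hbottom : ∀ s, G (s, 0) = bottom s)
    (htop : ∀ s, G (s, 1) = top s) : (left.trans top).Homotopic (bottom.trans right) := by
  let F : (G.curry 0).Homotopy (G.curry 1) := ⟨G, fun _ ↦ rfl, fun _ ↦ rfl⟩
  have h := (Path.Homotopic.map_trans_evalAt F Path.id).pathCast
    (show a = G.curry 0 0 by simp [hleft]) (show d = G.curry 1 1 by simp [hright])
  convert h using 1
  · ext t
    simp only [Path.trans_apply, ← hleft, ← htop]
    rw [Path.cast_coe, Path.trans_apply]
    rfl
  · ext t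
    simp only [Path.trans_apply, ← hright, ← hbottom]
    rw [Path.cast_coe, Path.trans_apply]
    rfl

lemma continuous_fiberIncl (f : X → Y) (y : Y) : Continuous (fiberIncl f y) := by
  unfold fiberIncl
  fun_prop

namespace HomotopyFiber

variable {f : C(X, Y)} {x x' : X} {y y' : Y}

/-- The point `(x, q)` of the homotopy fiber. -/
def ofPath (q : Path (f x) y) : HomotopyFiber f y :=
  ⟨(x, q), q.source, q.target⟩

/-- The path in `Y` carried by a point of the homotopy fiber. -/
def toPath (z : HomotopyFiber f y) : Path (f (fiberIncl f y z)) y :=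
  ⟨z.1.2, z.2.1, z.2.2⟩

lemma joined_ofPath_of_homotopic {q q' : Path (f x) y} (h : q.Homotopic q') :
    Joined (ofPath q) (ofPath q') := by
  obtain ⟨H⟩ := h
  refine ⟨⟨⟨fun s ↦ ⟨(x, H.toContinuousMap.curry s), H.source s, H.target s⟩, by fun_prop⟩,
    Subtype.ext (Prod.ext rfl ?_), Subtype.ext (Prod.ext rfl ?_)⟩⟩
  · exact ContinuousMap.ext H.apply_zero
  · exact ContinuousMap.ext H.apply_one

/-- The path moves the starting point of `(f ∘ δ) · q` along its first half. -/
lemma joined_ofPath_trans (δ : Path x x') (q : Path (f x') y) :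
    Joined (ofPath ((δ.map f.continuous).trans q)) (ofPath q) := by
  let w := (δ.map f.continuous).trans q
  let tail : C(I, C(I, Y)) :=
    ContinuousMap.curry ⟨fun z ↦ w.extend (z.1 / 2 + z.2 * (1 - z.1 / 2)), by fun_prop⟩
  refine ⟨⟨⟨fun s ↦ ⟨(δ s, tail s), ?_, ?_⟩, by fun_prop⟩,
    Subtype.ext (Prod.ext δ.source ?_), Subtype.ext (Prod.ext δ.target ?_)⟩⟩
  · have half_mem : (s : ℝ) / 2 ∈ I := ⟨by linarith [s.2.1], by linarith [s.2.2]⟩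
    simp only [tail, w, ContinuousMap.curry_apply, ContinuousMap.coe_mk, Set.Icc.coe_zero, zero_mul,
      add_zero, Path.extend_apply _ half_mem, Path.trans_apply]
    rw [dif_pos (by linarith [s.2.2])]
    exact congr_arg (f ∘ δ) (Subtype.ext (mul_div_cancel₀ _ two_ne_zero))
  · simp [tail]
  · ext r
    simp [tail, ofPath, w]
  · ext r
    have mem : (1 / 2 + r * (1 - 1 / 2) : ℝ) ∈ I :=
      ⟨by linarith [r.2.1], by linarith [r.2.2]⟩
    simp only [tail, w, ContinuousMap.curry_apply, ContinuousMap.coe_mk, Set.Icc.coe_one,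
      Path.extend_apply _ mem, Path.trans_apply, ofPath]
    split_ifs with h
    · obtain rfl : r = 0 := Subtype.ext (by linarith [r.2.1, show ((0 : I) : ℝ) = 0 from rfl])
      simp
    · exact congr_arg q (Subtype.ext (by simp only; ring))

lemma exists_homotopic_of_joined {q : Path (f x) y} {q' : Path (f x') y}
    (h : Joined (ofPath q) (ofPath q')) :
    ∃ δ : Path x x', q.Homotopic ((δ.map f.continuous).trans q') := by
  obtain ⟨P⟩ := h
  let δ : Path x x' := P.map (continuous_fiberIncl f y)
  have square : (q.trans (Path.refl y)).Homotopic ((δ.map f.continuous).trans q') :=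
    homotopic_trans_of_square ⟨fun z ↦ (P z.1).1.2 z.2, by fun_prop⟩
      (fun r ↦ congr_arg (fun e : HomotopyFiber f y ↦ e.1.2 r) P.source)
      (fun r ↦ congr_arg (fun e : HomotopyFiber f y ↦ e.1.2 r) P.target)
      (fun s ↦ (P s).2.1) (fun s ↦ (P s).2.2)
  exact ⟨δ, Path.Homotopic.trans ⟨(Path.Homotopy.transRefl q).symm⟩ square⟩

lemma joined_ofPath_iff {q : Path (f x) y} {q' : Path (f x') y} :
    Joined (ofPath q) (ofPath q') ↔
      ∃ δ : Path x x', q.Homotopic ((δ.map f.continuous).trans q') :=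
  ⟨exists_homotopic_of_joined, fun ⟨δ, h⟩ ↦
    (joined_ofPath_of_homotopic h).trans (joined_ofPath_trans δ q')⟩

open Classical in
/-- The boundary condition on the paths in the mapping path space of `f`. -/
noncomputable def endpoints (f : X → Y) (b : X × Y) (t : I) : Y :=
  if t = 0 then f b.1 else b.2

lemma continuousOn_endpoints (f : C(X, Y)) :
    ContinuousOn (Function.uncurry (endpoints f)) (Set.univ ×ˢ {0, 1}) := by
  rw [Set.insert_eq, Set.prod_union]
  refine ContinuousOn.union_of_isClosed ?_ ?_ (isClosed_univ.prod isClosed_singleton)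
    (isClosed_univ.prod isClosed_singleton)
  · refine (by fun_prop : Continuous fun z : (X × Y) × I ↦ f z.1.1).continuousOn.congr ?_
    rintro ⟨b, t⟩ ⟨-, rfl⟩
    simp [endpoints]
  · refine (by fun_prop : Continuous fun z : (X × Y) × I ↦ z.1.2).continuousOn.congr ?_
    rintro ⟨b, t⟩ ⟨-, rfl⟩
    simp [endpoints]

/-- A path lifting function for the mapping path space of `f`, as a space over `Y`. -/
noncomputable def pathLifting (f : C(X, Y)) :
    PathLifting fun e : ExtensionSpace {0, 1} (endpoints f) ↦ e.1.1.2 :=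
  (CofibrationRetraction.interval.pathLifting (continuousOn_endpoints f)).sndComp (by fun_prop)

/-- The fibers of the mapping path space over `Y` are the homotopy fibers. -/
def fiberHomeo (f : C(X, Y)) (y : Y) :
    (fun e : ExtensionSpace {0, 1} (endpoints f) ↦ e.1.1.2) ⁻¹' {y} ≃ₜ HomotopyFiber f y where
  toFun e := ⟨(e.1.1.1.1, e.1.1.2), (e.1.2 0 (by simp)).trans (if_pos rfl),
    ((e.1.2 1 (by simp)).trans (if_neg one_ne_zero)).trans e.2⟩
  invFun p := ⟨⟨((p.1.1, y), p.1.2), by simp [endpoints, p.2]⟩, rfl⟩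
  left_inv e := Subtype.ext (Subtype.ext (Prod.ext (Prod.ext rfl e.2.symm) rfl))
  right_inv _ := rfl
  continuous_toFun := by fun_prop
  continuous_invFun := by fun_prop

/-- The homotopy equivalence of homotopy fibers induced by a path in the base. -/
noncomputable def transportEquiv (p : Path y y') : HomotopyFiber f y ≃ₕ HomotopyFiber f y' :=
  ((fiberHomeo f y).symm.toHomotopyEquiv.trans ((pathLifting f).transportEquiv p)).trans
    (fiberHomeo f y').toHomotopyEquiv

/-- The path shrinks `q` to its starting point. -/
lemma joined_transportEquiv_refl (q : Path (f x) y) :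
    Joined ((transportEquiv q).toFun (ofPath (Path.refl (f x)))) (ofPath q) := by
  let initial : C(I, C(I, Y)) := ContinuousMap.curry ⟨fun z ↦ q (z.2 * z.1), by fun_prop⟩
  let δ : Path ((fiberHomeo f (f x)).symm (ofPath (Path.refl (f x)))).1
      ((fiberHomeo f y).symm (ofPath q)).1 :=
    { toFun s := ⟨((x, q s), initial s), by simp [endpoints, initial]⟩
      continuous_toFun := Continuous.subtype_mk (by fun_prop) fun _ ↦ by simp [endpoints, initial]
      source' := by
        refine Subtype.ext (Prod.ext (Prod.ext rfl q.source) (ContinuousMap.ext fun r ↦ ?_))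
        simp [initial, fiberHomeo, ofPath]
      target' := by
        refine Subtype.ext (Prod.ext (Prod.ext rfl q.target) (ContinuousMap.ext fun r ↦ ?_))
        simp [initial, fiberHomeo, ofPath] }
  exact ⟨((pathLifting f).joined_transport q δ fun _ ↦ rfl).some.map (fiberHomeo f y).continuous⟩

lemma card_homotopyGroup_ofPath (N : Type*) [Finite N] (q : Path (f x) y) :
    Nat.card (HomotopyGroup N (HomotopyFiber f y) (ofPath q)) =
      Nat.card (HomotopyGroup N (HomotopyFiber f (f x)) (ofPath (Path.refl (f x)))) :=
  (card_homotopyGroup_of_joined (joined_transportEquiv_refl q)).symm.trans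
    (card_homotopyGroup_homotopyEquiv (transportEquiv q) _)

end HomotopyFiber

lemma range_pi0Map_fiberIncl (f : C(X, Y)) (y : Y) :
    Set.range (pi0Map (continuous_fiberIncl f y)) = pi0Map f.continuous ⁻¹' {toPi0 y} := by
  ext a
  obtain ⟨x, rfl⟩ := toPi0_surjective a
  rw [Set.mem_preimage, Set.mem_singleton_iff, pi0Map_toPi0, toPi0_eq_toPi0_iff]
  constructor
  · rintro ⟨z, hz⟩
    obtain ⟨z, rfl⟩ := toPi0_surjective z
    exact ((toPi0_eq_toPi0_iff.1 hz).map f.continuous).symm.trans ⟨HomotopyFiber.toPath z⟩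
  · rintro ⟨q⟩
    exact ⟨toPi0 (HomotopyFiber.ofPath q), rfl⟩

lemma card_range_mul_card_subgroup {G S : Type*} [Group G] (H : Subgroup G) (d : G → S)
    (hd : ∀ g g', d g = d g' ↔ g⁻¹ * g' ∈ H) :
    Nat.card (Set.range d) * Nat.card H = Nat.card G := by
  have ker_eq : Setoid.ker d = QuotientGroup.leftRel H := by
    ext g g'
    rw [Setoid.ker_def, hd, QuotientGroup.leftRel_apply]
  rw [H.card_eq_card_quotient_mul_card_subgroup,
    ← Nat.card_congr (Setoid.quotientKerEquivRange d), ker_eq]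
  rfl

section LoopComponent

variable {f : C(X, Y)} {x : X} {y : Y}

/-- The component of the homotopy fiber reached from that of `(x, p)` under the monodromy action of
the fundamental group of the base. -/
noncomputable def loopComponent (p : Path (f x) y) :
    FundamentalGroup Y (f x) → ZerothHomotopy (HomotopyFiber f y) :=
  Quotient.lift (s := Path.Homotopic.setoid (f x) (f x))
    (fun ω ↦ toPi0 (HomotopyFiber.ofPath (ω.trans p))) fun _ _ h ↦
    toPi0_eq_toPi0_iff.2 (HomotopyFiber.joined_ofPath_of_homotopic (h.hcomp (.refl p)))

lemma trans_eq_trans_iff {a b c : Y} (p : Path.Homotopic.Quotient b c)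
    (ω ω' : Path.Homotopic.Quotient a b) (δ : Path.Homotopic.Quotient a a) :
    ω'.trans p = δ.trans (ω.trans p) ↔ δ = ω'.trans ω.symm := by
  constructor
  · intro h
    simpa using congr_arg (fun c ↦ (c.trans p.symm).trans ω.symm) h.symm
  · rintro rfl
    rw [Path.Homotopic.Quotient.trans_assoc, ← Path.Homotopic.Quotient.trans_assoc ω.symm]
    simp

lemma loopComponent_eq_iff (p : Path (f x) y) (g g' : FundamentalGroup Y (f x)) :
    loopComponent p g = loopComponent p g' ↔ g⁻¹ * g' ∈ (FundamentalGroup.map f x).range := by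
  obtain ⟨ω : Path (f x) (f x), rfl⟩ := Path.Homotopic.Quotient.mk_surjective g
  obtain ⟨ω' : Path (f x) (f x), rfl⟩ := Path.Homotopic.Quotient.mk_surjective g'
  calc loopComponent p (.mk ω) = loopComponent p (.mk ω')
    _ ↔ Joined (HomotopyFiber.ofPath (ω'.trans p)) (HomotopyFiber.ofPath (ω.trans p)) :=
      toPi0_eq_toPi0_iff.trans ⟨Joined.symm, Joined.symm⟩
    _ ↔ ∃ δ : Path x x, (ω'.trans p).Homotopic ((δ.map f.continuous).trans (ω.trans p)) :=
      HomotopyFiber.joined_ofPath_iff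
    _ ↔ ∃ δ : Path x x, (Path.Homotopic.Quotient.mk δ).map f =
        (Path.Homotopic.Quotient.mk ω').trans (Path.Homotopic.Quotient.mk ω).symm :=
      exists_congr fun δ ↦ by
        rw [← trans_eq_trans_iff (.mk p), ← Path.Homotopic.Quotient.eq]
        simp only [Path.Homotopic.Quotient.mk_trans, Path.Homotopic.Quotient.mk_map]
    _ ↔ ∃ δ : Path.Homotopic.Quotient x x, δ.map f =
        (Path.Homotopic.Quotient.mk ω').trans (Path.Homotopic.Quotient.mk ω).symm :=
      (Path.Homotopic.Quotient.mk_surjective.exists (p := fun δ ↦ δ.map f = _)).symm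

lemma range_loopComponent (p : Path (f x) y) :
    Set.range (loopComponent p) = pi0Map (continuous_fiberIncl f y) ⁻¹' {toPi0 x} := by
  ext z
  obtain ⟨z, rfl⟩ := toPi0_surjective z
  rw [Set.mem_preimage, Set.mem_singleton_iff, pi0Map_toPi0, toPi0_eq_toPi0_iff]
  constructor
  · rintro ⟨g, hg⟩
    obtain ⟨ω, rfl⟩ := Path.Homotopic.Quotient.mk_surjective g
    exact ⟨(toPi0_eq_toPi0_iff.1 hg).symm.some.map (continuous_fiberIncl f y)⟩
  · rintro ⟨γ⟩
    let q : Path (f (fiberIncl f y z)) y := HomotopyFiber.toPath z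
    refine ⟨.mk (((γ.symm.map f.continuous).trans q).trans p.symm), toPi0_eq_toPi0_iff.2 ?_⟩
    refine (HomotopyFiber.joined_ofPath_iff (q' := q)).2 ⟨γ.symm, ?_⟩
    rw [← Path.Homotopic.Quotient.eq]
    simp

lemma card_pi0_fiber_mul_card_range (p : Path (f x) y) :
    Nat.card (pi0Map (continuous_fiberIncl f y) ⁻¹' {toPi0 x}) *
      Nat.card (FundamentalGroup.map f x).range = Nat.card (FundamentalGroup Y (f x)) := by
  rw [← range_loopComponent p]
  exact card_range_mul_card_subgroup _ _ (loopComponent_eq_iff p)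

end LoopComponent

end HomotopyFibers

section ExactSequence

lemma card_range_eq_of_comp_eq {A A' B B' : Type*} (a : A ≃ A') (b : B ≃ B') {u : A → B}
    {v : A' → B'} (h : v ∘ a = b ∘ u) : Nat.card (Set.range u) = Nat.card (Set.range v) := by
  rw [← EquivLike.range_comp v a, h, Set.range_comp, Nat.card_image_of_injective b.injective]

lemma card_fiber_eq_of_comp_eq {A A' B B' : Type*} (a : A ≃ A') (b : B ≃ B') {u : A → B}
    {v : A' → B'} (h : v ∘ a = b ∘ u) (c : B) :
    Nat.card (u ⁻¹' {c}) = Nat.card (v ⁻¹' {b c}) := by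
  have preimage_eq : a ⁻¹' (v ⁻¹' {b c}) = u ⁻¹' {c} := by
    rw [← Set.preimage_comp, h]
    ext
    simp
  rw [← preimage_eq]
  exact Nat.card_congr (a.subtypeEquiv fun _ ↦ Iff.rfl)

variable {X Y : Type*} [TopologicalSpace X] [TopologicalSpace Y]

section LoopGroup

variable {N : Type*} [DecidableEq N]

/-- `π_N(X, x)` as the fundamental group of a loop space, singling out the coordinate `i`. -/
def loopGroupEquiv (i : N) (x : X) :
    ZerothHomotopy (Ω^ N X x) ≃ FundamentalGroup (Ω^ {j // j ≠ i} X x) GenLoop.const :=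
  (homotopyGroupEquivPi0 N x).symm.trans (homotopyGroupEquivFundamentalGroup i)

lemma loopGroupEquiv_comp_homotopyGroupMap (i : N) (f : C(X, Y)) (x : X) :
    FundamentalGroup.map (loopMap {j // j ≠ i} f x) GenLoop.const ∘ loopGroupEquiv i x =
      loopGroupEquiv i (f x) ∘ homotopyGroupMap N f x := by
  funext a
  obtain ⟨γ, rfl⟩ := toPi0_surjective a
  rfl

end LoopGroup

lemma card_range_homotopyGroupMap {N : Type*} (i : N) (f : C(X, Y)) (x : X) :
    Nat.card (Set.range (homotopyGroupMap N f x)) =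
      Nat.card (FundamentalGroup.map (loopMap {j // j ≠ i} f x) GenLoop.const).range := by
  classical
  exact card_range_eq_of_comp_eq (loopGroupEquiv i x) (loopGroupEquiv i (f x))
    (loopGroupEquiv_comp_homotopyGroupMap i f x)

/-- The kernel of `π_N(f)`. -/
abbrev homotopyGroupKer (N : Type*) (f : C(X, Y)) (x : X) : Set (ZerothHomotopy (Ω^ N X x)) :=
  homotopyGroupMap N f x ⁻¹' {toPi0 GenLoop.const}

lemma card_homotopyGroupKer_mul_card_range (N : Type*) [Nonempty N] (f : C(X, Y)) (x : X) :
    Nat.card (homotopyGroupKer N f x) * Nat.card (Set.range (homotopyGroupMap N f x)) =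
      Nat.card (HomotopyGroup N X x) := by
  classical
  obtain ⟨i⟩ := ‹Nonempty N›
  let φ := FundamentalGroup.map (loopMap {j // j ≠ i} f x) GenLoop.const
  have card_ker : Nat.card (homotopyGroupKer N f x) = Nat.card φ.ker :=
    card_fiber_eq_of_comp_eq (loopGroupEquiv i x) (loopGroupEquiv i (f x))
      (loopGroupEquiv_comp_homotopyGroupMap i f x) (toPi0 GenLoop.const)
  rw [card_ker, card_range_homotopyGroupMap i, ← Subgroup.index_ker, Subgroup.card_mul_index,
    card_homotopyGroup_eq_card_pi0]
  exact (Nat.card_congr (loopGroupEquiv i x)).symm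

lemma card_homotopyGroupKer_congr {M N : Type*} (e : M ≃ N) (f : C(X, Y)) (x : X) :
    Nat.card (homotopyGroupKer M f x) = Nat.card (homotopyGroupKer N f x) :=
  card_fiber_eq_of_comp_eq (pi0Equiv (GenLoop.congr x e).toHomotopyEquiv)
    (pi0Equiv (GenLoop.congr (f x) e).toHomotopyEquiv)
    (by
      funext a
      obtain ⟨γ, rfl⟩ := toPi0_surjective a
      rfl) (toPi0 GenLoop.const)

namespace HomotopyFiber

/-- The point of the homotopy fiber over `f x` given by `x` and the constant path. -/
abbrev basePoint (f : C(X, Y)) (x : X) : HomotopyFiber f (f x) :=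
  ofPath (Path.refl (f x))

/-- The bundled form of `fiberIncl`. -/
def incl (f : C(X, Y)) (y : Y) : C(HomotopyFiber f y, X) :=
  ⟨fiberIncl f y, continuous_fiberIncl f y⟩

end HomotopyFiber

/-- Taking loops commutes with taking homotopy fibers. -/
def fiberLoopMapHomeo (N : Type*) (f : C(X, Y)) (x : X) :
    HomotopyFiber (loopMap N f x) GenLoop.const ≃ₜ
      Ω^ N (HomotopyFiber f (f x)) (HomotopyFiber.basePoint f x) where
  toFun a :=
    ⟨⟨fun t ↦ ⟨(a.1.1 t, ⟨fun s ↦ a.1.2 s t, by fun_prop⟩),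
        congr_arg (fun γ : Ω^ N Y (f x) ↦ γ t) a.2.1, congr_arg (fun γ : Ω^ N Y (f x) ↦ γ t) a.2.2⟩,
      .subtype_mk (.prodMk (by fun_prop) (ContinuousMap.continuous_of_continuous_uncurry _
        (by fun_prop : Continuous fun z : (I^N) × I ↦ a.1.2 z.2 z.1))) _⟩,
      fun t ht ↦ Subtype.ext (Prod.ext (GenLoop.boundary a.1.1 t ht)
        (ContinuousMap.ext fun s ↦ GenLoop.boundary (a.1.2 s) t ht))⟩
  invFun b :=
    ⟨(⟨⟨fun t ↦ (b t).1.1, by fun_prop⟩, fun t ht ↦ congr_arg (fun z ↦ z.1.1) (b.2 t ht)⟩,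
      ⟨fun s ↦ ⟨⟨fun t ↦ (b t).1.2 s, by fun_prop⟩,
          fun t ht ↦ congr_arg (fun z ↦ z.1.2 s) (b.2 t ht)⟩,
        .subtype_mk (ContinuousMap.continuous_of_continuous_uncurry _
          (by fun_prop : Continuous fun z : I × (I^N) ↦ (b z.2).1.2 z.1)) _⟩),
      GenLoop.ext _ _ fun t ↦ (b t).2.1, GenLoop.ext _ _ fun t ↦ (b t).2.2⟩
  left_inv _ := rfl
  right_inv _ := rfl
  continuous_toFun := by
    refine .subtype_mk (ContinuousMap.continuous_of_continuous_uncurry _ ?_) _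
    refine .subtype_mk (.prodMk (by fun_prop) ?_) _
    refine ContinuousMap.continuous_of_continuous_uncurry _ ?_
    simp only [Function.uncurry_def, ContinuousMap.coe_mk]
    fun_prop
  continuous_invFun := by
    refine .subtype_mk (.prodMk (.subtype_mk ?_ _) ?_) _
    · refine ContinuousMap.continuous_of_continuous_uncurry _ ?_
      simp only [Function.uncurry_def, ContinuousMap.coe_mk]
      fun_prop
    · refine ContinuousMap.continuous_of_continuous_uncurry _ (.subtype_mk ?_ _)
      refine ContinuousMap.continuous_of_continuous_uncurry _ ?_
      simp only [Function.uncurry_def, ContinuousMap.coe_mk]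
      fun_prop

lemma homotopyGroupMap_incl_comp_fiberLoopMapHomeo (N : Type*) (f : C(X, Y)) (x : X) :
    homotopyGroupMap N (HomotopyFiber.incl f (f x)) (HomotopyFiber.basePoint f x) ∘
        pi0Equiv (fiberLoopMapHomeo N f x).toHomotopyEquiv =
      pi0Map (continuous_fiberIncl (loopMap N f x) GenLoop.const) := by
  funext a
  obtain ⟨γ, rfl⟩ := toPi0_surjective a
  rfl

lemma range_homotopyGroupMap_incl (N : Type*) (f : C(X, Y)) (x : X) :
    Set.range (homotopyGroupMap N (HomotopyFiber.incl f (f x)) (HomotopyFiber.basePoint f x)) =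
      homotopyGroupKer N f x := by
  rw [← EquivLike.range_comp _ (pi0Equiv (fiberLoopMapHomeo N f x).toHomotopyEquiv),
    homotopyGroupMap_incl_comp_fiberLoopMapHomeo]
  exact range_pi0Map_fiberIncl (loopMap N f x) GenLoop.const

lemma card_homotopyGroupKer_incl (N : Type*) (f : C(X, Y)) (x : X) :
    Nat.card (homotopyGroupKer N (HomotopyFiber.incl f (f x)) (HomotopyFiber.basePoint f x)) =
      Nat.card (pi0Map (continuous_fiberIncl (loopMap N f x) GenLoop.const) ⁻¹'
        {toPi0 GenLoop.const}) :=
  (card_fiber_eq_of_comp_eq (pi0Equiv (fiberLoopMapHomeo N f x).toHomotopyEquiv) (Equiv.refl _)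
    (homotopyGroupMap_incl_comp_fiberLoopMapHomeo N f x) (toPi0 GenLoop.const)).symm

/-- The monodromy count for the map of `n`-fold loop spaces. -/
lemma card_homotopyGroupKer_incl_mul_card_range (n : ℕ) (f : C(X, Y)) (x : X) :
    Nat.card
        (homotopyGroupKer (Fin n) (HomotopyFiber.incl f (f x)) (HomotopyFiber.basePoint f x)) *
      Nat.card (Set.range (homotopyGroupMap (Fin (n + 1)) f x)) =
    Nat.card (HomotopyGroup (Fin (n + 1)) Y (f x)) := by
  rw [card_homotopyGroupKer_congr (finSuccAboveEquiv 0), card_homotopyGroupKer_incl,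
    card_range_homotopyGroupMap 0]
  refine (card_pi0_fiber_mul_card_range (f := loopMap {j : Fin (n + 1) // j ≠ 0} f x)
    (x := GenLoop.const) (y := GenLoop.const) (Path.refl _)).trans ?_
  exact (Nat.card_congr (homotopyGroupEquivFundamentalGroup (0 : Fin (n + 1)))).symm

lemma card_pi0_fiber_mul_card_range_homotopyGroupMap {f : C(X, Y)} {x : X} {y : Y}
    (p : Path (f x) y) :
    Nat.card (pi0Map (continuous_fiberIncl f y) ⁻¹' {toPi0 x}) *
        Nat.card (Set.range (homotopyGroupMap (Fin 1) f x)) =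
      Nat.card (HomotopyGroup (Fin 1) Y (f x)) := by
  have comm : FundamentalGroup.map f x ∘
      (homotopyGroupEquivPi0 (Fin 1) x).symm.trans (homotopyGroupEquivFundamentalGroupOfUnique _) =
      (homotopyGroupEquivPi0 (Fin 1) (f x)).symm.trans
        (homotopyGroupEquivFundamentalGroupOfUnique _) ∘ homotopyGroupMap (Fin 1) f x := by
    funext a
    obtain ⟨γ, rfl⟩ := toPi0_surjective a
    rfl
  rw [card_range_eq_of_comp_eq _ _ comm]
  exact (card_pi0_fiber_mul_card_range p).trans
    (Nat.card_congr (homotopyGroupEquivFundamentalGroupOfUnique (Fin 1))).symm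

end ExactSequence

section HomotopyOrder

variable {X Y : Type*} [TopologicalSpace X] [TopologicalSpace Y]

lemma card_homotopyGroup_ne_zero (hX : IsLocallyFinite X) (x : X) (m : ℕ) :
    Nat.card (HomotopyGroup (Fin (m + 1)) X x) ≠ 0 := by
  have := (hX x).1 (m + 1) (Nat.le_add_left 1 m)
  exact Nat.card_pos.ne'

lemma eventually_card_homotopyGroup_eq_one (hX : IsLocallyFinite X) (x : X) :
    ∃ M, ∀ m ≥ M, Nat.card (HomotopyGroup (Fin (m + 1)) X x) = 1 := by
  obtain ⟨M, hM⟩ := (hX x).2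
  refine ⟨M, fun m hm ↦ ?_⟩
  have := hM (m + 1) (Nat.lt_succ_of_le hm)
  exact Nat.card_unique

lemma mu_eq_prod_range (x : X) {M : ℕ}
    (hM : ∀ m ≥ M, Nat.card (HomotopyGroup (Fin (m + 1)) X x) = 1) :
    mu X x = ∏ m ∈ Finset.range M,
      (Nat.card (HomotopyGroup (Fin (m + 1)) X x) : ℚ) ^ ((-1 : ℤ) ^ (m + 1)) := by
  refine finprod_eq_prod_of_mulSupport_subset _ fun m hm ↦ ?_
  contrapose! hm
  have hMm : M ≤ m := by simpa using hm
  simp [hM m hMm]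

lemma mu_eq_of_card_eq {x : X} {y : Y} (h : ∀ m, Nat.card (HomotopyGroup (Fin (m + 1)) X x) =
    Nat.card (HomotopyGroup (Fin (m + 1)) Y y)) : mu X x = mu Y y := by
  simp only [mu, h]

lemma mu_eq_of_joined {x x' : X} (h : Joined x x') : mu X x = mu X x' :=
  mu_eq_of_card_eq fun _ ↦ card_homotopyGroup_of_joined h

lemma mu_ne_zero (hX : IsLocallyFinite X) (x : X) : mu X x ≠ 0 := by
  obtain ⟨M, hM⟩ := eventually_card_homotopyGroup_eq_one hX x
  rw [mu_eq_prod_range x hM]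
  exact Finset.prod_ne_zero_iff.2 fun m _ ↦
    zpow_ne_zero _ (Nat.cast_ne_zero.2 (card_homotopyGroup_ne_zero hX x m))

lemma alternating_prod_mul_succ {K : Type*} [CommGroupWithZero K] {t : ℕ → K} (ht : ∀ m, t m ≠ 0)
    (M : ℕ) : (∏ m ∈ Finset.range M, (t m * t (m + 1)) ^ ((-1 : ℤ) ^ (m + 1))) * t 0 =
      t M ^ ((-1 : ℤ) ^ M) := by
  induction M with
  | zero => simp
  | succ M ih =>
    rw [Finset.prod_range_succ, mul_right_comm, ih, mul_zpow, ← mul_assoc, ← zpow_add₀ (ht M),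
      pow_succ, mul_neg_one, add_neg_cancel, zpow_zero, one_mul]

/-- The orders in a long exact sequence `⋯ → C (m + 1) → A m → B m → C m → ⋯ → C 0 → S → 1`, where
`i m`, `k m` and `t m` are the orders of the images of `B m → C m`, `A m → B m` and
`C m → A (m - 1)`, the last one being all of `S` for `m = 0`. -/
lemma alternating_prod_of_exact {A B C i k t : ℕ → ℕ} {M : ℕ}
    (hA : ∀ m, t (m + 1) * k m = A m) (hB : ∀ m, k m * i m = B m) (hC : ∀ m, t m * i m = C m)
    (hC₀ : ∀ m, C m ≠ 0) (hM : C M = 1) :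
    (∏ m ∈ Finset.range M, (A m : ℚ) ^ ((-1 : ℤ) ^ (m + 1))) * t 0 *
        ∏ m ∈ Finset.range M, (C m : ℚ) ^ ((-1 : ℤ) ^ (m + 1)) =
      ∏ m ∈ Finset.range M, (B m : ℚ) ^ ((-1 : ℤ) ^ (m + 1)) := by
  have t_ne_zero (m : ℕ) : (t m : ℚ) ≠ 0 :=
    Nat.cast_ne_zero.2 (left_ne_zero_of_mul (hC m ▸ hC₀ m))
  have t_M : t M = 1 := Nat.eq_one_of_mul_eq_one_right ((hC M).trans hM)
  have split (m : ℕ) : (A m : ℚ) * C m = (t m * t (m + 1)) * B m := by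
    rw [← hA, ← hB, ← hC]
    push_cast
    ring
  rw [mul_right_comm, ← Finset.prod_mul_distrib]
  simp only [← mul_zpow, split]
  simp only [mul_zpow _ (B _ : ℚ), Finset.prod_mul_distrib]
  rw [mul_right_comm, alternating_prod_mul_succ t_ne_zero, t_M, Nat.cast_one, one_zpow, one_mul]

lemma card_pi0_fiber_ne_zero (hY : IsLocallyFinite Y) {f : C(X, Y)} {x : X} {y : Y}
    (h : Joined (f x) y) :
    Nat.card (pi0Map (continuous_fiberIncl f y) ⁻¹' {toPi0 x}) ≠ 0 :=
  left_ne_zero_of_mul (card_pi0_fiber_mul_card_range_homotopyGroupMap h.somePath ▸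
    card_homotopyGroup_ne_zero hY (f x) 0)

lemma mu_basePoint_mul_card_mul_mu (hX : IsLocallyFinite X) (hY : IsLocallyFinite Y) {f : C(X, Y)}
    {x : X} {y : Y} (p : Path (f x) y) :
    mu (HomotopyFiber f (f x)) (HomotopyFiber.basePoint f x) *
        Nat.card (pi0Map (continuous_fiberIncl f y) ⁻¹' {toPi0 x}) * mu Y (f x) = mu X x := by
  let i (m : ℕ) : ℕ := Nat.card (Set.range (homotopyGroupMap (Fin (m + 1)) f x))
  let k (m : ℕ) : ℕ := Nat.card (homotopyGroupKer (Fin (m + 1)) f x)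
  let t : ℕ → ℕ
    | 0 => Nat.card (pi0Map (continuous_fiberIncl f y) ⁻¹' {toPi0 x})
    | m + 1 => Nat.card (homotopyGroupKer (Fin (m + 1)) (HomotopyFiber.incl f (f x))
        (HomotopyFiber.basePoint f x))
  have exact_fiber (m : ℕ) : t (m + 1) * k m = Nat.card
      (HomotopyGroup (Fin (m + 1)) (HomotopyFiber f (f x)) (HomotopyFiber.basePoint f x)) := by
    rw [← card_homotopyGroupKer_mul_card_range _ (HomotopyFiber.incl f (f x)),
      range_homotopyGroupMap_incl]
    rfl
  have exact_total (m : ℕ) : k m * i m = Nat.card (HomotopyGroup (Fin (m + 1)) X x) :=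
    card_homotopyGroupKer_mul_card_range _ f x
  have exact_base : ∀ m, t m * i m = Nat.card (HomotopyGroup (Fin (m + 1)) Y (f x))
    | 0 => card_pi0_fiber_mul_card_range_homotopyGroupMap p
    | m + 1 => card_homotopyGroupKer_incl_mul_card_range (m + 1) f x
  obtain ⟨MX, hMX⟩ := eventually_card_homotopyGroup_eq_one hX x
  obtain ⟨MY, hMY⟩ := eventually_card_homotopyGroup_eq_one hY (f x)
  have fiber_eq_one : ∀ m ≥ max MX MY, Nat.card
      (HomotopyGroup (Fin (m + 1)) (HomotopyFiber f (f x)) (HomotopyFiber.basePoint f x)) = 1 := by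
    intro m hm
    obtain ⟨hmX, hmY⟩ := max_le_iff.1 hm
    rw [← exact_fiber,
      Nat.eq_one_of_mul_eq_one_right ((exact_base (m + 1)).trans (hMY _ (by omega))),
      Nat.eq_one_of_mul_eq_one_right ((exact_total m).trans (hMX m hmX))]
  rw [mu_eq_prod_range _ fiber_eq_one,
    mu_eq_prod_range x fun m hm ↦ hMX m ((le_max_left _ _).trans hm),
    mu_eq_prod_range (f x) fun m hm ↦ hMY m ((le_max_right _ _).trans hm)]
  exact alternating_prod_of_exact exact_fiber exact_total exact_base
    (card_homotopyGroup_ne_zero hY _) (hMY _ (le_max_right _ _))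

lemma mu_fiber_mul_card_mul_mu (hX : IsLocallyFinite X) (hY : IsLocallyFinite Y) {f : C(X, Y)}
    {x : X} {y : Y} (z : HomotopyFiber f y) (h : toPi0 (fiberIncl f y z) = toPi0 x) :
    mu (HomotopyFiber f y) z * Nat.card (pi0Map (continuous_fiberIncl f y) ⁻¹' {toPi0 x}) * mu Y y =
      mu X x := by
  have mu_fiber : mu (HomotopyFiber f y) z =
      mu (HomotopyFiber f (f (fiberIncl f y z))) (HomotopyFiber.basePoint f (fiberIncl f y z)) :=
    mu_eq_of_card_eq fun m ↦
      HomotopyFiber.card_homotopyGroup_ofPath (Fin (m + 1)) (HomotopyFiber.toPath z)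
  rw [mu_fiber, ← h, ← mu_eq_of_joined ⟨HomotopyFiber.toPath z⟩,
    ← mu_eq_of_joined (toPi0_eq_toPi0_iff.1 h)]
  exact mu_basePoint_mul_card_mul_mu hX hY (HomotopyFiber.toPath z)

end HomotopyOrder

section Pushforward

lemma finsum_comp_mul {Z A R : Type*} [Semiring R] {p : Z → A} (w : A →₀ R) (n : Z → R)
    (hp : ∀ a, (p ⁻¹' {a}).Finite) :
    ∑ᶠ z, w (p z) * n z = w.sum fun a r ↦ r * ∑ᶠ z ∈ p ⁻¹' {a}, n z := by
  have support_subset : ∀ z ∈ Function.support fun z ↦ w (p z) * n z,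
      z ∈ Set.univ ↔ z ∈ ⋃ a ∈ (w.support : Set A), p ⁻¹' {a} := by
    intro z hz
    simpa using left_ne_zero_of_mul hz
  have fibers_disjoint : (w.support : Set A).PairwiseDisjoint fun a ↦ p ⁻¹' {a} :=
    fun a _ b _ hab ↦ Disjoint.preimage p (Set.disjoint_singleton.2 hab)
  rw [← finsum_mem_univ, finsum_mem_inter_support_eq' _ _ _ support_subset,
    finsum_mem_biUnion fibers_disjoint w.support.finite_toSet fun a _ ↦ hp a,
    finsum_mem_coe_finset]
  refine Finset.sum_congr rfl fun a _ ↦ ?_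
  refine Eq.trans ?_ (mul_finsum_mem' n (w a) (hp a)).symm
  exact finsum_mem_congr rfl fun z (hz : p z = a) ↦ by rw [hz]

lemma mapDomain_smul_eq_sum {A B R : Type*} [Semiring R] (p : A → B) (w : A → R) (v : A →₀ R) :
    (w • v).mapDomain p = v.sum fun a r ↦ Finsupp.single (p a) (w a * r) := by
  refine Finsupp.sum_of_support_subset _ (fun a ha ↦ ?_) _ fun _ _ ↦ Finsupp.single_zero _
  rw [Finsupp.mem_support_iff, Finsupp.coe_pointwise_smul] at ha
  exact Finsupp.mem_support_iff.2 (right_ne_zero_of_mul ha)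

/-- The weight `μ(X, -)` on the components of `X`: multiplication by it turns pushforward into
summation over the fibers of `π₀(f)`. -/
noncomputable def muWeight (X : Type*) [TopologicalSpace X] : ZerothHomotopy X → ℚ :=
  fun a ↦ mu X a.out

variable {X Y : Type*} [TopologicalSpace X] [TopologicalSpace Y]

lemma muWeight_ne_zero (hX : IsLocallyFinite X) (a : ZerothHomotopy X) : muWeight X a ≠ 0 :=
  mu_ne_zero hX a.out

lemma muWeight_mul_left_injective (hX : IsLocallyFinite X) :
    Function.Injective (muWeight X * ·) := fun _ _ h ↦
  funext fun a ↦ mul_left_cancel₀ (muWeight_ne_zero hX a) (congr_fun h a)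

lemma pi0_fiber_eq_empty {f : C(X, Y)} {y : Y} {a : ZerothHomotopy X}
    (h : pi0Map f.continuous a ≠ toPi0 y) : pi0Map (continuous_fiberIncl f y) ⁻¹' {a} = ∅ := by
  refine Set.eq_empty_of_forall_notMem fun z hz ↦ h ?_
  exact (range_pi0Map_fiberIncl f y).subset ⟨z, hz⟩

lemma finite_pi0_fiber (hY : IsLocallyFinite Y) (f : C(X, Y)) (y : Y) (a : ZerothHomotopy X) :
    (pi0Map (continuous_fiberIncl f y) ⁻¹' {a}).Finite := by
  by_cases h : pi0Map f.continuous a = toPi0 y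
  · obtain ⟨x, rfl⟩ := toPi0_surjective a
    exact Nat.finite_of_card_ne_zero (card_pi0_fiber_ne_zero hY (toPi0_eq_toPi0_iff.1 h))
  · rw [pi0_fiber_eq_empty h]
    exact Set.finite_empty

lemma toPi0_fiberIncl_out (f : C(X, Y)) {y : Y} (z : ZerothHomotopy (HomotopyFiber f y)) :
    toPi0 (fiberIncl f y z.out) = pi0Map (continuous_fiberIncl f y) z := by
  rw [← pi0Map_toPi0 (continuous_fiberIncl f y), toPi0_out]

lemma mu_mul_finsum_mu_fiber (hX : IsLocallyFinite X) (hY : IsLocallyFinite Y) {f : C(X, Y)}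
    {x : X} {y : Y} (h : Joined (f x) y) :
    mu Y y * ∑ᶠ z ∈ pi0Map (continuous_fiberIncl f y) ⁻¹' {toPi0 x},
      mu (HomotopyFiber f y) z.out = mu X x := by
  let s := pi0Map (continuous_fiberIncl f y) ⁻¹' {toPi0 x}
  change mu Y y * ∑ᶠ z ∈ s, mu (HomotopyFiber f y) z.out = mu X x
  have s_finite : s.Finite := finite_pi0_fiber hY f y (toPi0 x)
  have card_ne_zero : (Nat.card s : ℚ) ≠ 0 := Nat.cast_ne_zero.2 (card_pi0_fiber_ne_zero hY h)
  have mu_out_eq (z : ZerothHomotopy (HomotopyFiber f y)) (hz : z ∈ s) :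
      mu (HomotopyFiber f y) z.out = mu X x / (Nat.card s * mu Y y) := by
    rw [eq_div_iff (mul_ne_zero card_ne_zero (mu_ne_zero hY y)), ← mul_assoc]
    exact mu_fiber_mul_card_mul_mu hX hY z.out ((toPi0_fiberIncl_out f z).trans hz)
  rw [finsum_mem_congr rfl mu_out_eq,
    finsum_mem_eq_finite_toFinset_sum _ s_finite, Finset.sum_const,
    ← Set.ncard_eq_toFinset_card _ s_finite, nsmul_eq_mul, ← Nat.card_coe_set_eq]
  have := mu_ne_zero hY y
  field_simp

lemma muWeight_mul_finsum_mu_fiber (hX : IsLocallyFinite X) (hY : IsLocallyFinite Y) (f : C(X, Y))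
    (a : ZerothHomotopy X) (c : ZerothHomotopy Y) :
    muWeight Y c * ∑ᶠ z ∈ pi0Map (continuous_fiberIncl f c.out) ⁻¹' {a},
        mu (HomotopyFiber f c.out) z.out =
      Finsupp.single (pi0Map f.continuous a) (muWeight X a) c := by
  by_cases h : pi0Map f.continuous a = c
  · have joined_out : Joined (f a.out) c.out := by
      rw [← toPi0_eq_toPi0_iff, toPi0_out, ← pi0Map_toPi0 f.continuous, toPi0_out, h]
    have mass_eq := mu_mul_finsum_mu_fiber hX hY joined_out
    rw [toPi0_out] at mass_eq
    rw [h, Finsupp.single_eq_same]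
    exact mass_eq
  · have fiber_empty := pi0_fiber_eq_empty (y := c.out) (by rwa [toPi0_out])
    rw [fiber_empty, finsum_mem_empty, mul_zero, Finsupp.single_eq_of_ne' h]

lemma muWeight_mul_pushforward (hX : IsLocallyFinite X) (hY : IsLocallyFinite Y) (f : C(X, Y))
    (α : ZerothHomotopy X →₀ ℚ) :
    muWeight Y * pushforward f α = (muWeight X • α).mapDomain (pi0Map f.continuous) := by
  funext c
  calc muWeight Y c * pushforward f α c
    _ = muWeight Y c * ∑ᶠ z, α (pi0Map (continuous_fiberIncl f c.out) z) *
        mu (HomotopyFiber f c.out) z.out :=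
      congr_arg (muWeight Y c * ·) <| finsum_congr fun z ↦ by rw [toPi0_fiberIncl_out]
    _ = α.sum fun a r ↦ muWeight Y c *
        (r * ∑ᶠ z ∈ pi0Map (continuous_fiberIncl f c.out) ⁻¹' {a},
          mu (HomotopyFiber f c.out) z.out) :=
      (congr_arg (muWeight Y c * ·) <| finsum_comp_mul α _ <| finite_pi0_fiber hY f c.out).trans
        (Finset.mul_sum _ _ _)
    _ = α.sum fun a r ↦ Finsupp.single (pi0Map f.continuous a) (muWeight X a * r) c := by
      refine Finset.sum_congr rfl fun a _ ↦ (mul_left_comm _ _ _).trans ?_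
      change _ = Finsupp.single _ (muWeight X a * α a) c
      rw [muWeight_mul_finsum_mu_fiber hX hY, mul_comm (muWeight X a), ← smul_eq_mul,
        ← smul_eq_mul, ← Finsupp.smul_single, Finsupp.smul_apply]
    _ = (muWeight X • α).mapDomain (pi0Map f.continuous) c := by
      rw [mapDomain_smul_eq_sum, Finsupp.sum_apply]

lemma finite_support_pushforward (hX : IsLocallyFinite X) (hY : IsLocallyFinite Y) (f : C(X, Y))
    (α : ZerothHomotopy X →₀ ℚ) : (Function.support (pushforward f α)).Finite := by
  refine ((muWeight X • α).mapDomain (pi0Map f.continuous)).hasFiniteSupport.subset fun c hc ↦ ?_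
  rw [← muWeight_mul_pushforward hX hY f]
  exact mul_ne_zero (muWeight_ne_zero hY c) hc

end Pushforward

theorem statement2 {X Y Z : Type*} [TopologicalSpace X] [TopologicalSpace Y]
    [TopologicalSpace Z]
    (hX : IsLocallyFinite X) (hY : IsLocallyFinite Y) (hZ : IsLocallyFinite Z)
    {f : X → Y} (hf : Continuous f) {g : Y → Z} (hg : Continuous g)
    (α : ZerothHomotopy X → ℚ) (hα : (Function.support α).Finite) :
    (Function.support (pushforward f α)).Finite ∧
    pushforward (g ∘ f) α = pushforward g (pushforward f α) := by
  lift α to ZerothHomotopy X →₀ ℚ using hα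
  have hβ := finite_support_pushforward hX hY ⟨f, hf⟩ α
  refine ⟨hβ, muWeight_mul_left_injective hZ ?_⟩
  obtain ⟨β, β_eq⟩ : ∃ β : ZerothHomotopy Y →₀ ℚ, β = pushforward f α := CanLift.prf _ hβ
  have weighted_eq : muWeight Y • β = (muWeight X • α).mapDomain (pi0Map hf) := by
    refine DFunLike.coe_injective (Eq.trans ?_ (muWeight_mul_pushforward hX hY ⟨f, hf⟩ α))
    exact congr_arg (muWeight Y * ·) β_eq
  calc muWeight Z * pushforward (g ∘ f) α
    _ = (muWeight X • α).mapDomain (pi0Map (hg.comp hf)) :=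
      muWeight_mul_pushforward hX hZ ⟨g ∘ f, hg.comp hf⟩ α
    _ = (muWeight Y • β).mapDomain (pi0Map hg) := by
      rw [pi0Map_comp, Finsupp.mapDomain_comp, weighted_eq]
    _ = muWeight Z * pushforward g β := (muWeight_mul_pushforward hY hZ ⟨g, hg⟩ β).symm
    _ = muWeight Z * pushforward g (pushforward f α) := by rw [β_eq]
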